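/- Cut admissibility: let B be an A-formula and let Δ₁ and Δ₂ be finite multisets of A-formulas. If both ⊢B,Δ₁ and ⊢¬B,Δ₂ are provable in the additive propositional proof system (where ¬B is the negation normal form of the negation of B), then ⊢Δ₁,Δ₂ (the multiset union) is provable. -/

import Mathlib

/-- A-formulas: purely additive propositional formulas built from
conjunction, truth, disjunction, and false (no atoms). -/
inductive AForm : Type
  | conj : AForm → AForm → AForm   -- ∧
  | tt   : AForm                   -- t (unit of ∧)
  | disj : AForm → AForm → AForm   -- ∨
  | ff   : AForm                   -- f (unit of ∨)
  deriving DecidableEq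

/-- Provability of one-sided sequents ⊢Δ (Δ a finite multiset of A-formulas)
in the purely additive propositional proof system. -/
inductive AProv : Multiset AForm → Prop
  | conj {B₁ B₂ : AForm} {Δ : Multiset AForm} :
      AProv (B₁ ::ₘ Δ) → AProv (B₂ ::ₘ Δ) → AProv (AForm.conj B₁ B₂ ::ₘ Δ)
  | tt {Δ : Multiset AForm} : AProv (AForm.tt ::ₘ Δ)
  | disjL {B₁ B₂ : AForm} {Δ : Multiset AForm} :
      AProv (B₁ ::ₘ Δ) → AProv (AForm.disj B₁ B₂ ::ₘ Δ)
  | disjR {B₁ B₂ : AForm} {Δ : Multiset AForm} :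
      AProv (B₂ ::ₘ Δ) → AProv (AForm.disj B₁ B₂ ::ₘ Δ)


/-- Negation normal form: the de Morgan dual of an A-formula. -/
def AForm.neg : AForm → AForm
  | AForm.conj B C => AForm.disj B.neg C.neg
  | AForm.tt       => AForm.ff
  | AForm.disj B C => AForm.conj B.neg C.neg
  | AForm.ff       => AForm.tt

/-!
An A-formula has no atoms, so it is either true or false. The rules preserve the property that some
member of the sequent is true, and a true formula is provable in any context; hence `⊢ Δ` is
provable exactly when some member of `Δ` is true. Since `B` and `¬B` are not both true, `Δ₁` or `Δ₂`
contains a true formula.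
-/

namespace AForm

/-- The truth value of an A-formula, valued in `Prop` so that it unfolds to the connectives of the
ambient logic. As there are no atoms, no valuation is needed. -/
def Holds : AForm → Prop
  | conj B C => B.Holds ∧ C.Holds
  | tt       => True
  | disj B C => B.Holds ∨ C.Holds
  | ff       => False

theorem holds_neg (B : AForm) : B.neg.Holds ↔ ¬ B.Holds := by
  induction B with
  | conj B C ihB ihC => simp only [neg, Holds, ihB, ihC, not_and_or]
  | tt => simp only [neg, Holds, not_true]
  | disj B C ihB ihC => simp only [neg, Holds, ihB, ihC, not_or]
  | ff => simp only [neg, Holds, not_false_iff]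

end AForm

namespace AProv

theorem cons_of_holds {B : AForm} (hB : B.Holds) (Δ : Multiset AForm) : AProv (B ::ₘ Δ) := by
  induction B with
  | conj B C ihB ihC => exact conj (ihB hB.1) (ihC hB.2)
  | tt => exact tt
  | disj B C ihB ihC => exact hB.elim (fun h => disjL (ihB h)) (fun h => disjR (ihC h))
  | ff => exact hB.elim

theorem exists_holds {Δ : Multiset AForm} (hΔ : AProv Δ) : ∃ B ∈ Δ, B.Holds := by
  induction hΔ with
  | conj _ _ ih₁ ih₂ =>
    simp only [Multiset.mem_cons, exists_eq_or_imp, AForm.Holds] at ih₁ ih₂ ⊢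
    exact and_or_right.mpr ⟨ih₁, ih₂⟩
  | tt => exact ⟨AForm.tt, Multiset.mem_cons_self _ _, trivial⟩
  | disjL _ ih =>
    simp only [Multiset.mem_cons, exists_eq_or_imp, AForm.Holds] at ih ⊢
    exact ih.imp_left Or.inl
  | disjR _ ih =>
    simp only [Multiset.mem_cons, exists_eq_or_imp, AForm.Holds] at ih ⊢
    exact ih.imp_left Or.inr

theorem iff_exists_holds {Δ : Multiset AForm} : AProv Δ ↔ ∃ B ∈ Δ, B.Holds := by
  refine ⟨exists_holds, ?_⟩
  rintro ⟨B, hBΔ, hB⟩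
  obtain ⟨Γ, rfl⟩ := Multiset.exists_cons_of_mem hBΔ
  exact cons_of_holds hB Γ

theorem cons_iff {B : AForm} {Δ : Multiset AForm} : AProv (B ::ₘ Δ) ↔ B.Holds ∨ AProv Δ := by
  simp only [iff_exists_holds, Multiset.mem_cons, exists_eq_or_imp]

theorem add_iff {Δ₁ Δ₂ : Multiset AForm} : AProv (Δ₁ + Δ₂) ↔ AProv Δ₁ ∨ AProv Δ₂ := by
  simp only [iff_exists_holds, Multiset.mem_add, or_and_right, exists_or]

end AProv

/-- Cut admissibility: if ⊢B,Δ₁ and ⊢¬B,Δ₂ are provable then ⊢Δ₁,Δ₂ is provable. -/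
theorem cut_admissibility (B : AForm) (Δ₁ Δ₂ : Multiset AForm)
    (h₁ : AProv (B ::ₘ Δ₁)) (h₂ : AProv (B.neg ::ₘ Δ₂)) : AProv (Δ₁ + Δ₂) := by
  rw [AProv.cons_iff] at h₁ h₂
  rw [AForm.holds_neg] at h₂
  rw [AProv.add_iff]
  rcases h₁ with hB | hΔ₁
  · exact Or.inr (h₂.resolve_left (not_not_intro hB))
  · exact Or.inl hΔ₁
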